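/- arXiv:2409.00913 — 7 statements merged into one kernel-verified Lean document; each statement's English description precedes it below -/
import Mathlib

section
/- Let f : ℝⁿ → ℝ be a differentiable convex function with f(0) = 0 and f(x) ≥ 0 for all x, and let g : ℝⁿ → ℝ be a differentiable convex function. Let α, β : [0,∞) → ℝ be differentiable functions satisfying exp(α(t)) ≥ β'(t) > 0 for all t ≥ 0, and let a : [0,∞) → [0,1] be any function. Suppose X : [0,∞) → ℝⁿ is twice differentiable, and define Z(t) = X(t) + exp(−α(t))·X'(t) and Y(t) = X(t) + a(t)·(Z(t) − X(t)). Assume the curve t ↦ ∇g(Z(t)) is differentiable with derivative (d/dt)∇g(Z(t)) = −exp(α(t)+β(t))·∇f(Y(t)) for every t ≥ 0. Then the energy E(t) = D_g(0, Z(t)) + exp(β(t))·f(X(t)) is monotonically non-increasing on [0,∞), and f(X(t)) ≤ exp(−β(t))·E(0) for all t ≥ 0. -/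
open Set RealInnerProductSpace

/-- Bregman divergence `D_g(y, x) = g(y) − g(x) − ⟨∇g(x), y − x⟩`, where `g'`
is the gradient map of `g`. -/
noncomputable def breg {n : ℕ} (g : EuclideanSpace ℝ (Fin n) → ℝ)
    (g' : EuclideanSpace ℝ (Fin n) → EuclideanSpace ℝ (Fin n))
    (y x : EuclideanSpace ℝ (Fin n)) : ℝ :=
  g y - g x - ⟪g' x, y - x⟫

/-
Along a trajectory `d/dt D_g(p, Z) = -⟪d/dt ∇g(Z), p - Z⟫`, so the momentum equation reduces the
decay of the energy to the pointwise inequality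
`f(X) - f(p) + ⟪∇f(X), Z - X⟫ ≤ ⟪∇f(Y), Z - p⟫`. The latter holds for every `Y` on the segment from
`X` to `Z`: it combines the tangent inequality from `X` to `Y`, the tangent inequality from `Y` to
`p`, and the monotonicity of `∇f` between `X` and `Y`.
-/

section HilbertSpace

variable {F : Type*} [NormedAddCommGroup F] [InnerProductSpace ℝ F]

/-- The Bregman divergence of `g` in an arbitrary real inner product space, with `g'` playing the
role of the gradient map; `breg` is the case of a Euclidean space. -/
def bregmanDiv (g : F → ℝ) (g' : F → F) (y x : F) : ℝ :=
  g y - g x - ⟪g' x, y - x⟫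

/-- Trajectories of (G-ODE-C) over a set `T` of times, as a first-order system in the position `X`
and the mirror point `Z`: the definition `Z = X + exp (-α) • X'` is read as an equation for `X'`,
and the gradient of `f` is evaluated at `Y = X + a • (Z - X)`. -/
structure IsGODECTrajectoryOn (f' g' : F → F) (α β a : ℝ → ℝ) (X Z : ℝ → F) (T : Set ℝ) :
    Prop where
  position : ∀ t ∈ T, HasDerivWithinAt X (Real.exp (α t) • (Z t - X t)) T t
  momentum : ∀ t ∈ T, HasDerivWithinAt (fun u => g' (Z u))
    (-Real.exp (α t + β t) • f' (X t + a t • (Z t - X t))) T t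
  differentiableOn : DifferentiableOn ℝ Z T

/-- The Lyapunov function of (G-ODE-C) relative to a reference point `p`, which need not be `0` and
at which `f` need not vanish. -/
noncomputable def godecEnergy (f g : F → ℝ) (g' : F → F) (β : ℝ → ℝ) (X Z : ℝ → F) (p : F)
    (t : ℝ) : ℝ :=
  bregmanDiv g g' p (Z t) + Real.exp (β t) * (f (X t) - f p)

variable {f g : F → ℝ} {f' g' : F → F} {α α' β β' a : ℝ → ℝ} {X X' X'' Z : ℝ → F} {T : Set ℝ}
  {p : F} {t : ℝ}

theorem isGODECTrajectoryOn_of_hasDerivWithinAt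
    (hα : ∀ t ∈ T, HasDerivWithinAt α (α' t) T t)
    (hX : ∀ t ∈ T, HasDerivWithinAt X (X' t) T t)
    (hX' : ∀ t ∈ T, HasDerivWithinAt X' (X'' t) T t)
    (hZ : ∀ t, Z t = X t + Real.exp (-α t) • X' t)
    (hODE : ∀ t ∈ T, HasDerivWithinAt (fun u => g' (Z u))
      (-Real.exp (α t + β t) • f' (X t + a t • (Z t - X t))) T t) :
    IsGODECTrajectoryOn f' g' α β a X Z T where
  position t ht := by
    have velocity : Real.exp (α t) • (Z t - X t) = X' t := by
      rw [hZ, add_sub_cancel_left, smul_smul, ← Real.exp_add, add_neg_cancel, Real.exp_zero,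
        one_smul]
    exact velocity ▸ hX t ht
  momentum := hODE
  differentiableOn t ht := by
    rw [funext hZ]
    exact ((hX t ht).add ((hα t ht).fun_neg.exp.smul (hX' t ht))).differentiableWithinAt

variable [CompleteSpace F]

section ConvexGradient

variable {s : Set F} {x y gx gy : F}

theorem add_inner_gradient_le_of_convexOn (hf : ConvexOn ℝ s f) (hx : x ∈ s) (hy : y ∈ s)
    (hgx : HasGradientWithinAt f gx s x) : f x + ⟪gx, y - x⟫ ≤ f y := by
  let line : ℝ →ᵃ[ℝ] F := AffineMap.lineMap x y
  have line_zero : line 0 = x := AffineMap.lineMap_apply_zero x y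
  have line_one : line 1 = y := AffineMap.lineMap_apply_one x y
  have deriv_zero : HasDerivWithinAt (f ∘ line) ⟪gx, y - x⟫ (line ⁻¹' s) 0 :=
    hgx.hasFDerivWithinAt.comp_hasDerivWithinAt_of_eq 0 AffineMap.hasDerivWithinAt_lineMap
      (mapsTo_preimage line s) line_zero.symm
  have le_slope := (hf.comp_affineMap line).le_slope_of_hasDerivWithinAt
    (by rwa [mem_preimage, line_zero]) (by rwa [mem_preimage, line_one]) one_pos deriv_zero
  rw [slope_def_field, Function.comp_apply, Function.comp_apply, line_zero, line_one, sub_zero,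
    div_one] at le_slope
  linarith

theorem inner_gradient_le_inner_gradient_of_convexOn (hf : ConvexOn ℝ s f) (hx : x ∈ s)
    (hy : y ∈ s) (hgx : HasGradientWithinAt f gx s x) (hgy : HasGradientWithinAt f gy s y) :
    ⟪gx, y - x⟫ ≤ ⟪gy, y - x⟫ := by
  have tangent_x := add_inner_gradient_le_of_convexOn hf hx hy hgx
  have tangent_y := add_inner_gradient_le_of_convexOn hf hy hx hgy
  rw [← neg_sub y x, inner_neg_right] at tangent_y
  linarith

theorem sub_add_inner_gradient_le_inner_gradient_segment (hf : ConvexOn ℝ s f)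
    (hf' : ∀ u ∈ s, HasGradientWithinAt f (f' u) s u) {z : F} {c : ℝ} (hc : c ∈ Icc (0 : ℝ) 1)
    (hx : x ∈ s) (hp : p ∈ s) (hy : x + c • (z - x) ∈ s) :
    f x - f p + ⟪f' x, z - x⟫ ≤ ⟪f' (x + c • (z - x)), z - p⟫ := by
  set y := x + c • (z - x) with y_def
  have hyx : y - x = c • (z - x) := add_sub_cancel_left x _
  have tangent_xy : f x + c * ⟪f' x, z - x⟫ ≤ f y := by
    simpa only [hyx, inner_smul_right] using
      add_inner_gradient_le_of_convexOn hf hx hy (hf' x hx)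
  have tangent_yp : f y + ⟪f' y, p - y⟫ ≤ f p :=
    add_inner_gradient_le_of_convexOn hf hy hp (hf' y hy)
  have gradient_mono : ⟪f' x, z - x⟫ ≤ ⟪f' y, z - x⟫ := by
    rcases hc.1.eq_or_lt with hc_zero | hc_pos
    · rw [y_def, ← hc_zero, zero_smul, add_zero]
    · have := inner_gradient_le_inner_gradient_of_convexOn hf hx hy (hf' x hx) (hf' y hy)
      rw [hyx, inner_smul_right, inner_smul_right] at this
      exact le_of_mul_le_mul_left this hc_pos
  have split_zp : ⟪f' y, z - p⟫ = -⟪f' y, p - y⟫ + (1 - c) * ⟪f' y, z - x⟫ := by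
    rw [← inner_smul_right, ← inner_neg_right, ← inner_add_right]
    congr 1
    module
  have := mul_le_mul_of_nonneg_left gradient_mono (sub_nonneg.2 hc.2)
  linarith

theorem bregmanDiv_nonneg (hg : ConvexOn ℝ s g) (hx : x ∈ s) (hy : y ∈ s)
    (hg' : HasGradientWithinAt g (g' x) s x) : 0 ≤ bregmanDiv g g' y x := by
  have := add_inner_gradient_le_of_convexOn hg hx hy hg'
  rw [bregmanDiv]
  linarith

end ConvexGradient

theorem hasDerivWithinAt_bregmanDiv {P' : F} (hg' : HasGradientAt g (g' (Z t)) (Z t))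
    (hZ : DifferentiableWithinAt ℝ Z T t)
    (hP : HasDerivWithinAt (fun u => g' (Z u)) P' T t) :
    HasDerivWithinAt (fun u => bregmanDiv g g' p (Z u)) (-⟪P', p - Z t⟫) T t := by
  have hZ' := hZ.hasDerivWithinAt
  have deriv_g : HasDerivWithinAt (fun u => g (Z u)) ⟪g' (Z t), derivWithin Z T t⟫ T t :=
    hg'.hasFDerivAt.comp_hasDerivWithinAt t hZ'
  refine ((deriv_g.const_sub (g p)).sub (hP.inner ℝ (hZ'.const_sub p))).congr_deriv ?_
  rw [inner_neg_right]
  ring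

theorem hasDerivWithinAt_godecEnergy {b : ℝ} (hf' : HasGradientAt f (f' (X t)) (X t))
    (hg' : HasGradientAt g (g' (Z t)) (Z t)) (hβ : HasDerivWithinAt β b T t)
    (h : IsGODECTrajectoryOn f' g' α β a X Z T) (ht : t ∈ T) :
    HasDerivWithinAt (godecEnergy f g g' β X Z p)
      (Real.exp (β t) * (b * (f (X t) - f p) + Real.exp (α t) *
        (⟪f' (X t), Z t - X t⟫ - ⟪f' (X t + a t • (Z t - X t)), Z t - p⟫))) T t := by
  have deriv_f : HasDerivWithinAt (fun u => f (X u))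
      ⟪f' (X t), Real.exp (α t) • (Z t - X t)⟫ T t :=
    hf'.hasFDerivAt.comp_hasDerivWithinAt t (h.position t ht)
  refine ((hasDerivWithinAt_bregmanDiv hg' (h.differentiableOn t ht) (h.momentum t ht)).add
    (hβ.exp.mul (deriv_f.sub_const (f p)))).congr_deriv ?_
  rw [← neg_sub (Z t) p, inner_neg_right, neg_neg, real_inner_smul_left, real_inner_smul_right,
    Real.exp_add]
  ring

theorem antitoneOn_godecEnergy (hf' : ∀ x, HasGradientAt f (f' x) x)
    (hg' : ∀ x, HasGradientAt g (g' x) x) (hf : ConvexOn ℝ univ f) (hp : ∀ x, f p ≤ f x)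
    (hT : Convex ℝ T) (hβ : ∀ t ∈ T, HasDerivWithinAt β (β' t) T t)
    (hscale : ∀ t ∈ T, β' t ≤ Real.exp (α t)) (ha : ∀ t ∈ T, a t ∈ Icc (0 : ℝ) 1)
    (h : IsGODECTrajectoryOn f' g' α β a X Z T) :
    AntitoneOn (godecEnergy f g g' β X Z p) T := by
  have deriv_energy (t : ℝ) (ht : t ∈ T) :=
    hasDerivWithinAt_godecEnergy (p := p) (hf' (X t)) (hg' (Z t)) (hβ t ht) h ht
  refine antitoneOn_of_hasDerivWithinAt_nonpos hT
    (fun t ht => (deriv_energy t ht).continuousWithinAt)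
    (fun t ht => (deriv_energy t (interior_subset ht)).mono interior_subset)
    fun t ht_interior => ?_
  have ht : t ∈ T := interior_subset ht_interior
  have segment := sub_add_inner_gradient_le_inner_gradient_segment hf
    (fun u _ => hasGradientWithinAt_univ.2 (hf' u)) (z := Z t) (ha t ht)
    (mem_univ (X t)) (mem_univ p) (mem_univ _)
  have gap_growth : β' t * (f (X t) - f p) ≤ Real.exp (α t) * (f (X t) - f p) :=
    mul_le_mul_of_nonneg_right (hscale t ht) (sub_nonneg.2 (hp (X t)))
  have := mul_le_mul_of_nonneg_left segment (Real.exp_pos (α t)).le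
  refine mul_nonpos_of_nonneg_of_nonpos (Real.exp_pos (β t)).le ?_
  linarith

theorem sub_le_exp_neg_mul_godecEnergy (hg : ConvexOn ℝ univ g)
    (hg' : HasGradientAt g (g' (Z t)) (Z t)) :
    f (X t) - f p ≤ Real.exp (-β t) * godecEnergy f g g' β X Z p t := by
  have breg_nonneg : 0 ≤ bregmanDiv g g' p (Z t) :=
    bregmanDiv_nonneg hg (mem_univ _) (mem_univ _) (hasGradientWithinAt_univ.2 hg')
  rw [Real.exp_neg, ← div_eq_inv_mul, le_div_iff₀' (Real.exp_pos _), godecEnergy]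
  linarith

theorem godec_energy_decay_general (hf' : ∀ x, HasGradientAt f (f' x) x)
    (hg' : ∀ x, HasGradientAt g (g' x) x) (hf : ConvexOn ℝ univ f) (hg : ConvexOn ℝ univ g)
    (hp : ∀ x, f p ≤ f x) (hT : Convex ℝ T) (hβ : ∀ t ∈ T, HasDerivWithinAt β (β' t) T t)
    (hscale : ∀ t ∈ T, β' t ≤ Real.exp (α t)) (ha : ∀ t ∈ T, a t ∈ Icc (0 : ℝ) 1)
    (h : IsGODECTrajectoryOn f' g' α β a X Z T) :
    AntitoneOn (godecEnergy f g g' β X Z p) T ∧ ∀ t₀ ∈ T, ∀ t ∈ T, t₀ ≤ t →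
      f (X t) - f p ≤ Real.exp (-β t) * godecEnergy f g g' β X Z p t₀ := by
  have anti := antitoneOn_godecEnergy hf' hg' hf hp hT hβ hscale ha h
  refine ⟨anti, fun t₀ ht₀ t ht htt₀ => ?_⟩
  exact (sub_le_exp_neg_mul_godecEnergy hg (hg' (Z t))).trans
    (mul_le_mul_of_nonneg_left (anti ht₀ ht htt₀) (Real.exp_pos _).le)

end HilbertSpace

/-- Lyapunov convergence of the generalized model (G-ODE-C) in the convex case. -/
theorem godec_energy_decay {n : ℕ}
    (f g : EuclideanSpace ℝ (Fin n) → ℝ)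
    (f' g' : EuclideanSpace ℝ (Fin n) → EuclideanSpace ℝ (Fin n))
    (hf' : ∀ x, HasGradientAt f (f' x) x)
    (hg' : ∀ x, HasGradientAt g (g' x) x)
    (hfconv : ConvexOn ℝ univ f)
    (hgconv : ConvexOn ℝ univ g)
    (hf0 : f 0 = 0)
    (hfnn : ∀ x, 0 ≤ f x)
    (α β α' β' : ℝ → ℝ)
    (hα : ∀ t, 0 ≤ t → HasDerivAt α (α' t) t)
    (hβ : ∀ t, 0 ≤ t → HasDerivAt β (β' t) t)
    (hscale : ∀ t, 0 ≤ t → 0 < β' t ∧ β' t ≤ Real.exp (α t))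
    (a : ℝ → ℝ)
    (ha : ∀ t, 0 ≤ t → a t ∈ Icc (0 : ℝ) 1)
    (X X' X'' Z Y : ℝ → EuclideanSpace ℝ (Fin n))
    (hX : ∀ t, 0 ≤ t → HasDerivAt X (X' t) t)
    (hX' : ∀ t, 0 ≤ t → HasDerivAt X' (X'' t) t)
    (hZ : ∀ t, Z t = X t + Real.exp (-α t) • X' t)
    (hY : ∀ t, Y t = X t + a t • (Z t - X t))
    (hODE : ∀ t, 0 ≤ t →
      HasDerivAt (fun u => g' (Z u)) (-(Real.exp (α t + β t)) • f' (Y t)) t)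
    (E : ℝ → ℝ)
    (hE : ∀ t, E t = breg g g' 0 (Z t) + Real.exp (β t) * f (X t)) :
    AntitoneOn E (Ici 0) ∧ ∀ t, 0 ≤ t → f (X t) ≤ Real.exp (-β t) * E 0 := by
  obtain rfl : E = godecEnergy f g g' β X Z 0 := by
    funext t
    rw [hE, godecEnergy, hf0, sub_zero]
    rfl
  have trajectory : IsGODECTrajectoryOn f' g' α β a X Z (Ici 0) :=
    isGODECTrajectoryOn_of_hasDerivWithinAt (fun t ht => (hα t ht).hasDerivWithinAt)
      (fun t ht => (hX t ht).hasDerivWithinAt) (fun t ht => (hX' t ht).hasDerivWithinAt) hZ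
      fun t ht => hY t ▸ (hODE t ht).hasDerivWithinAt
  have ⟨anti, decay⟩ := godec_energy_decay_general hf' hg' hfconv hgconv
    (fun x => hf0.trans_le (hfnn x)) (convex_Ici 0) (fun t ht => (hβ t ht).hasDerivWithinAt)
    (fun t ht => (hscale t ht).2) ha trajectory
  exact ⟨anti, fun t ht => by simpa only [hf0, sub_zero] using decay 0 self_mem_Ici t ht ht⟩
end

section
/- Let f : ℝⁿ → ℝ be a differentiable convex function whose gradient ∇f is L-Lipschitz (L > 0). Let (x_k)_{k ≥ 0} and (y_k)_{k ≥ 1} be sequences in ℝⁿ generated by Nesterov's two-sequence method: y_k = x_k + b_k·(x_k − x_{k−1}) and x_{k+1} = y_k − s_k·∇f(y_k) for k ≥ 1, where 0 < s_k ≤ 1/L and 0 < b_k ≤ 1 for all k. If ⟨x_{k+1} − 2x_k + x_{k−1}, x_k − x_{k−1}⟩ ≥ 0 for all k ≥ 1, then for every k ≥ 1 one has f(x_{k+1}) ≤ f(x_k), with strict inequality f(x_{k+1}) < f(x_k) whenever ∇f(y_k) ≠ 0. -/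
open Set RealInnerProductSpace

/-! The restart condition at step `k` forces the gradient `g = ∇f (y_k)` to have a nonpositive
inner product with `d = x_k - x_{k-1}`: substituting the recursion turns it into
`0 ≤ (b_k - 1) ‖d‖² - s_k ⟪g, d⟫`. Since `y_k = x_k + b_k d`, convexity then gives
`f (y_k) ≤ f (x_k) + b_k ⟪g, d⟫ ≤ f (x_k)`, so the extrapolation does not increase `f`. The gradient
step from `y_k` to `x_{k+1}` decreases `f` by at least `s_k (1 - L s_k / 2) ‖g‖²`, by the quadratic
upper bound for functions with Lipschitz gradient. -/

section FDeriv

variable {E F : Type*} [NormedAddCommGroup E] [NormedSpace ℝ E]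
  [NormedAddCommGroup F] [NormedSpace ℝ F] {S : Set E} {x y : E}

theorem add_hasFDerivWithinAt_apply_sub_le_of_convexOn {f : E → ℝ} {f' : E →L[ℝ] ℝ}
    (hf : ConvexOn ℝ S f) (hx : x ∈ S) (hy : y ∈ S) (hf' : HasFDerivWithinAt f f' S x) :
    f x + f' (y - x) ≤ f y := by
  let γ : ℝ →ᵃ[ℝ] E := AffineMap.lineMap x y
  have hγ0 : γ 0 = x := AffineMap.lineMap_apply_zero x y
  have hγ1 : γ 1 = y := AffineMap.lineMap_apply_one x y
  have hderiv : HasDerivWithinAt (f ∘ γ) (f' (y - x)) (γ ⁻¹' S) 0 :=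
    HasFDerivWithinAt.comp_hasDerivWithinAt 0 (by rwa [hγ0])
      AffineMap.hasDerivWithinAt_lineMap (mapsTo_preimage γ S)
  have hslope : f' (y - x) ≤ slope (f ∘ γ) 0 1 :=
    (hf.comp_affineMap γ).le_slope_of_hasDerivWithinAt (by simpa [hγ0]) (by simpa [hγ1])
      one_pos hderiv
  rw [slope_def_field, Function.comp_apply, Function.comp_apply, hγ0, hγ1, sub_zero, div_one]
    at hslope
  linarith

theorem norm_sub_sub_hasFDerivWithinAt_apply_le_of_lipschitzOnWith {f : E → F}
    {f' : E → E →L[ℝ] F} {K : NNReal} (hS : Convex ℝ S)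
    (hf : ∀ z ∈ S, HasFDerivWithinAt f (f' z) S z) (hf' : LipschitzOnWith K f' S)
    (hx : x ∈ S) (hy : y ∈ S) :
    ‖f y - f x - f' x (y - x)‖ ≤ K / 2 * ‖y - x‖ ^ 2 := by
  let γ : ℝ → E := AffineMap.lineMap x y
  let r : ℝ → F := fun t => f (γ t) - f x - t • f' x (y - x)
  have hγ : MapsTo γ (Icc 0 1) S := fun t ht => hS.lineMap_mem hx hy ht
  have hr (t) (ht : t ∈ Icc (0 : ℝ) 1) :
      HasDerivWithinAt r ((f' (γ t) - f' x) (y - x)) (Icc 0 1) t := by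
    have hfγ : HasDerivWithinAt (f ∘ γ) (f' (γ t) (y - x)) (Icc 0 1) t :=
      (hf _ (hγ ht)).comp_hasDerivWithinAt t AffineMap.hasDerivWithinAt_lineMap hγ
    exact ((hfγ.sub_const (f x)).sub
      ((hasDerivWithinAt_id t _).smul_const (f' x (y - x)))).congr_deriv (by simp)
  have hr' (t) (ht : t ∈ Ico (0 : ℝ) 1) :
      ‖(f' (γ t) - f' x) (y - x)‖ ≤ K * ‖y - x‖ ^ 2 * t :=
    calc
      ‖(f' (γ t) - f' x) (y - x)‖ ≤ ‖f' (γ t) - f' x‖ * ‖y - x‖ := ContinuousLinearMap.le_opNorm _ _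
      _ ≤ K * ‖γ t - x‖ * ‖y - x‖ := by
        gcongr
        exact hf'.norm_sub_le (hγ (Ico_subset_Icc_self ht)) hx
      _ = K * ‖y - x‖ ^ 2 * t := by
        rw [← vsub_eq_sub (γ t), AffineMap.lineMap_vsub_left, norm_smul,
          Real.norm_of_nonneg ht.1, vsub_eq_sub]
        ring
  have hB (t : ℝ) : HasDerivAt (fun t => K / 2 * ‖y - x‖ ^ 2 * t ^ 2) (K * ‖y - x‖ ^ 2 * t) t := by
    refine ((hasDerivAt_pow 2 t).const_mul (K / 2 * ‖y - x‖ ^ 2)).congr_deriv ?_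
    ring
  have hr1 : ‖r 1‖ ≤ K / 2 * ‖y - x‖ ^ 2 * 1 ^ 2 :=
    image_norm_le_of_norm_deriv_right_le_deriv_boundary
      (fun t ht => (hr t ht).continuousWithinAt)
      (fun t ht =>
        (hr t (Ico_subset_Icc_self ht)).mono_of_mem_nhdsWithin (Icc_mem_nhdsGE_of_mem ht))
      (by simp [r, γ]) hB hr' (right_mem_Icc.2 zero_le_one)
  simpa [r, γ] using hr1

end FDeriv

theorem inner_sub_nonpos_of_restart {E : Type*} [SeminormedAddCommGroup E] [InnerProductSpace ℝ E]
    {x₀ x₁ x₂ y g : E} {b s : ℝ} (hs : 0 < s) (hb : b ≤ 1) (hy : y = x₁ + b • (x₁ - x₀))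
    (hx₂ : x₂ = y - s • g) (hrestart : 0 ≤ ⟪x₂ - (2 : ℝ) • x₁ + x₀, x₁ - x₀⟫) :
    ⟪g, x₁ - x₀⟫ ≤ 0 := by
  have hacc : x₂ - (2 : ℝ) • x₁ + x₀ = (b - 1) • (x₁ - x₀) - s • g := by
    rw [hx₂, hy]
    module
  rw [hacc, inner_sub_left, real_inner_smul_left, real_inner_smul_left,
    real_inner_self_eq_norm_sq] at hrestart
  have hdamp : (b - 1) * ‖x₁ - x₀‖ ^ 2 ≤ 0 :=
    mul_nonpos_of_nonpos_of_nonneg (sub_nonpos.2 hb) (sq_nonneg _)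
  exact nonpos_of_mul_nonpos_right (by linarith) hs

section Gradient

variable {E : Type*} [NormedAddCommGroup E] [InnerProductSpace ℝ E] [CompleteSpace E]
  {f : E → ℝ} {f' : E → E} {K : NNReal}

theorem apply_gradient_step_le (hf : ∀ z, HasGradientAt f (f' z) z) (hf' : LipschitzWith K f')
    (x : E) (s : ℝ) : f (x - s • f' x) ≤ f x - s * (1 - K * s / 2) * ‖f' x‖ ^ 2 := by
  have hdual : LipschitzWith K fun z => InnerProductSpace.toDual ℝ E (f' z) :=
    one_mul K ▸ (InnerProductSpace.toDual ℝ E).lipschitz.comp hf'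
  have htaylor := norm_sub_sub_hasFDerivWithinAt_apply_le_of_lipschitzOnWith convex_univ
    (fun z _ => (hf z).hasFDerivAt.hasFDerivWithinAt) hdual.lipschitzOnWith
    (mem_univ x) (mem_univ (x - s • f' x))
  have hstep : x - s • f' x - x = -(s • f' x) := by abel
  rw [hstep, norm_neg, norm_smul, mul_pow, Real.norm_eq_abs, Real.norm_eq_abs, sq_abs, map_neg,
    InnerProductSpace.toDual_apply_apply, real_inner_smul_right, real_inner_self_eq_norm_sq]
    at htaylor
  linarith [le_of_abs_le htaylor]

theorem nesterov_restart_step_le (hf : ∀ z, HasGradientAt f (f' z) z) (hconv : ConvexOn ℝ univ f)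
    (hf' : LipschitzWith K f') {x₀ x₁ x₂ y : E} {b s : ℝ} (hs : 0 < s) (hb₀ : 0 ≤ b) (hb₁ : b ≤ 1)
    (hy : y = x₁ + b • (x₁ - x₀)) (hx₂ : x₂ = y - s • f' y)
    (hrestart : 0 ≤ ⟪x₂ - (2 : ℝ) • x₁ + x₀, x₁ - x₀⟫) :
    f x₂ ≤ f x₁ - s * (1 - K * s / 2) * ‖f' y‖ ^ 2 := by
  have hangle : b * ⟪f' y, x₁ - x₀⟫ ≤ 0 :=
    mul_nonpos_of_nonneg_of_nonpos hb₀ (inner_sub_nonpos_of_restart hs hb₁ hy hx₂ hrestart)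
  have hback : x₁ - y = -(b • (x₁ - x₀)) := by
    rw [hy]
    abel
  have hextrap : f y - b * ⟪f' y, x₁ - x₀⟫ ≤ f x₁ := by
    simpa [hback, real_inner_smul_right, ← sub_eq_add_neg] using
      add_hasFDerivWithinAt_apply_sub_le_of_convexOn hconv (mem_univ y) (mem_univ x₁)
        (hf y).hasFDerivAt.hasFDerivWithinAt
  have hdescent : f x₂ ≤ f y - s * (1 - K * s / 2) * ‖f' y‖ ^ 2 :=
    hx₂ ▸ apply_gradient_step_le hf hf' y s
  linarith

theorem nesterov_restart_monotone_general (hf : ∀ z, HasGradientAt f (f' z) z)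
    (hconv : ConvexOn ℝ univ f) (hf' : LipschitzWith K f') (x y : ℕ → E) (b s : ℕ → ℝ)
    (hs : ∀ k, 1 ≤ k → 0 < s k ∧ K * s k < 2) (hb : ∀ k, 1 ≤ k → 0 ≤ b k ∧ b k ≤ 1)
    (hy : ∀ k, 1 ≤ k → y k = x k + b k • (x k - x (k - 1)))
    (hx : ∀ k, 1 ≤ k → x (k + 1) = y k - s k • f' (y k)) (k : ℕ) (hk : 1 ≤ k)
    (hrestart : 0 ≤ ⟪x (k + 1) - (2 : ℝ) • x k + x (k - 1), x k - x (k - 1)⟫) :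
    f (x (k + 1)) ≤ f (x k) ∧ (f' (y k) ≠ 0 → f (x (k + 1)) < f (x k)) := by
  obtain ⟨hs₀, hs₂⟩ := hs k hk
  obtain ⟨hb₀, hb₁⟩ := hb k hk
  have hdecrease := nesterov_restart_step_le hf hconv hf' hs₀ hb₀ hb₁ (hy k hk) (hx k hk) hrestart
  have hcoeff : 0 < s k * (1 - K * s k / 2) := mul_pos hs₀ (by linarith)
  refine ⟨hdecrease.trans (sub_le_self _ (by positivity)), fun hne => ?_⟩
  exact hdecrease.trans_lt (sub_lt_self _ (mul_pos hcoeff (pow_pos (norm_pos_iff.2 hne) 2)))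

end Gradient

/-- Monotone decrease of the objective values along Nesterov's two-sequence method
under the restart condition `⟨x_{k+1} − 2x_k + x_{k−1}, x_k − x_{k−1}⟩ ≥ 0`. -/
theorem nesterov_restart_monotone {n : ℕ}
    (f : EuclideanSpace ℝ (Fin n) → ℝ)
    (f' : EuclideanSpace ℝ (Fin n) → EuclideanSpace ℝ (Fin n))
    (L : ℝ) (hL : 0 < L)
    (hf' : ∀ x, HasGradientAt f (f' x) x)
    (hfconv : ConvexOn ℝ univ f)
    (hlip : LipschitzWith (Real.toNNReal L) f')
    (x y : ℕ → EuclideanSpace ℝ (Fin n))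
    (b s : ℕ → ℝ)
    (hs : ∀ k, 0 < s k ∧ s k ≤ 1 / L)
    (hb : ∀ k, 0 < b k ∧ b k ≤ 1)
    (hy : ∀ k, 1 ≤ k → y k = x k + b k • (x k - x (k - 1)))
    (hx : ∀ k, 1 ≤ k → x (k + 1) = y k - s k • f' (y k))
    (hrestart : ∀ k, 1 ≤ k →
      0 ≤ ⟪x (k + 1) - (2 : ℝ) • x k + x (k - 1), x k - x (k - 1)⟫) :
    ∀ k, 1 ≤ k →
      f (x (k + 1)) ≤ f (x k) ∧ (f' (y k) ≠ 0 → f (x (k + 1)) < f (x k)) := by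
  have hs' (k) : 0 < s k ∧ L.toNNReal * s k < 2 := by
    rw [Real.coe_toNNReal L hL.le]
    exact ⟨(hs k).1, by linarith [(le_div_iff₀' hL).1 (hs k).2]⟩
  exact fun k hk => nesterov_restart_monotone_general hf' hfconv hlip x y b s (fun i _ => hs' i)
    (fun i _ => ⟨(hb i).1.le, (hb i).2⟩) hy hx k hk (hrestart k hk)
end

section
/- Let f : ℝⁿ → ℝ be a differentiable convex function with f(0) = 0 and f(x) ≥ 0 for all x. Let A, B ∈ ℝ with exp(A) ≥ B > 0, let a ∈ [0,1], and let x, v ∈ ℝⁿ. Define Y = x + a·exp(−A)·v and Z = x + exp(−A)·v. Then exp(A)·⟨Z, ∇f(Y)⟩ ≥ B·f(x) + ⟨v, ∇f(x)⟩. -/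
open Set RealInnerProductSpace

/-!
Put `w = e^{-A} v`, so that `Y = x + a w` and `Z = Y + (1 - a) w`. Since `B f(x) ≤ e^A f(x)`,
dividing by `e^A` reduces the claim to `f(x) + ⟨w, ∇f(x)⟩ ≤ ⟨Y, ∇f(Y)⟩ + (1 - a) ⟨w, ∇f(Y)⟩`.
The tangent at `Y` evaluated at `0`, where `f` vanishes, gives `⟨Y, ∇f(Y)⟩ ≥ f(Y)`. The tangent
at `x` gives `f(Y) ≥ f(x) + a ⟨w, ∇f(x)⟩`, and monotonicity of the gradient along the ray from `x`
gives `⟨w, ∇f(Y)⟩ ≥ ⟨w, ∇f(x)⟩`.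
-/

section ConvexFDeriv

variable {E : Type*} [NormedAddCommGroup E] [NormedSpace ℝ E] {s : Set E} {f : E → ℝ}

theorem add_hasFDerivWithinAt_le_of_convexOn {φ : StrongDual ℝ E} {x y : E}
    (hf : ConvexOn ℝ s f) (hφ : HasFDerivWithinAt f φ s x) (hx : x ∈ s) (hy : y ∈ s) :
    f x + φ (y - x) ≤ f y := by
  let ℓ : ℝ →ᵃ[ℝ] E := AffineMap.lineMap x y
  have hderiv : HasDerivWithinAt (f ∘ ℓ) (φ (y - x)) (ℓ ⁻¹' s) 0 :=
    hφ.comp_hasDerivWithinAt_of_eq 0 AffineMap.hasDerivWithinAt_lineMap (mapsTo_preimage ℓ s)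
      (AffineMap.lineMap_apply_zero x y).symm
  have hslope : φ (y - x) ≤ slope (f ∘ ℓ) 0 1 :=
    (hf.comp_affineMap ℓ).le_slope_of_hasDerivWithinAt (by simpa [ℓ] using hx)
      (by simpa [ℓ] using hy) zero_lt_one hderiv
  have hsecant : slope (f ∘ ℓ) 0 1 = f y - f x := by simp [slope_def_field, ℓ]
  linarith

theorem hasFDerivWithinAt_apply_sub_le_of_convexOn {φ ψ : StrongDual ℝ E} {x y : E}
    (hf : ConvexOn ℝ s f) (hφ : HasFDerivWithinAt f φ s x) (hψ : HasFDerivWithinAt f ψ s y)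
    (hx : x ∈ s) (hy : y ∈ s) : φ (y - x) ≤ ψ (y - x) := by
  have hxy := add_hasFDerivWithinAt_le_of_convexOn hf hφ hx hy
  have hyx := add_hasFDerivWithinAt_le_of_convexOn hf hψ hy hx
  rw [← neg_sub y x, map_neg] at hyx
  linarith

variable {f' : E → StrongDual ℝ E}

theorem hasFDerivWithinAt_apply_le_add_smul_of_convexOn {x w : E} {a : ℝ}
    (hf : ConvexOn ℝ s f) (hf' : ∀ y ∈ s, HasFDerivWithinAt f (f' y) s y)
    (hx : x ∈ s) (hxw : x + a • w ∈ s) (ha : 0 ≤ a) : f' x w ≤ f' (x + a • w) w := by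
  obtain rfl | ha := ha.eq_or_lt
  · simp
  · have hmono :=
      hasFDerivWithinAt_apply_sub_le_of_convexOn hf (hf' x hx) (hf' _ hxw) hx hxw
    simp only [add_sub_cancel_left, map_smul, smul_eq_mul] at hmono
    exact le_of_mul_le_mul_left hmono ha

theorem sub_add_le_hasFDerivWithinAt_add_smul_of_convexOn {x w z : E} {a : ℝ}
    (hf : ConvexOn ℝ s f) (hf' : ∀ y ∈ s, HasFDerivWithinAt f (f' y) s y)
    (hx : x ∈ s) (hz : z ∈ s) (hxw : x + a • w ∈ s) (ha : a ∈ Icc (0 : ℝ) 1) :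
    f x - f z + f' x w ≤ f' (x + a • w) (x + w - z) := by
  set y := x + a • w with hy
  have tangent_x : f x + a * f' x w ≤ f y := by
    simpa [hy] using add_hasFDerivWithinAt_le_of_convexOn hf (hf' x hx) hx hxw
  have tangent_y : f y + f' y (z - y) ≤ f z :=
    add_hasFDerivWithinAt_le_of_convexOn hf (hf' y hxw) hxw hz
  have mono : (1 - a) * f' x w ≤ (1 - a) * f' y w :=
    mul_le_mul_of_nonneg_left (hasFDerivWithinAt_apply_le_add_smul_of_convexOn hf hf' hx hxw ha.1)
      (sub_nonneg.2 ha.2)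
  have decomposition : x + w - z = (1 - a) • w - (z - y) := by rw [hy]; module
  rw [decomposition, map_sub, map_smul, smul_eq_mul]
  linarith

theorem godec_key_inequality_general (hf : ConvexOn ℝ s f)
    (hf' : ∀ y ∈ s, HasFDerivWithinAt f (f' y) s y) (h0 : 0 ∈ s) (hf0 : f 0 ≤ 0)
    {A B a : ℝ} (hAB : B ≤ Real.exp A) (ha : a ∈ Icc (0 : ℝ) 1) {x v : E}
    (hx : x ∈ s) (hfx : 0 ≤ f x) (hY : x + (a * Real.exp (-A)) • v ∈ s) :
    B * f x + f' x v ≤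
      Real.exp A * f' (x + (a * Real.exp (-A)) • v) (x + Real.exp (-A) • v) := by
  rw [mul_smul] at hY ⊢
  set w := Real.exp (-A) • v with hw
  have hv : v = Real.exp A • w := by rw [hw, smul_smul, ← Real.exp_add]; simp
  have key : f x - f 0 + f' x w ≤ f' (x + a • w) (x + w) := by
    simpa only [sub_zero] using sub_add_le_hasFDerivWithinAt_add_smul_of_convexOn hf hf' hx h0 hY ha
  calc B * f x + f' x v
      ≤ Real.exp A * f x + f' x v := by gcongr
    _ = Real.exp A * (f x + f' x w) := by rw [hv, map_smul, smul_eq_mul, mul_add]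
    _ ≤ Real.exp A * f' (x + a • w) (x + w) := by gcongr; linarith

end ConvexFDeriv

/-- Key pointwise inequality in the Lyapunov analysis of (G-ODE-C):
`e^A ⟨Z, ∇f(Y)⟩ ≥ B f(x) + ⟨v, ∇f(x)⟩` where `Y = x + a e^{−A} v` and
`Z = x + e^{−A} v`. -/
theorem godec_key_inequality {n : ℕ}
    (f : EuclideanSpace ℝ (Fin n) → ℝ)
    (f' : EuclideanSpace ℝ (Fin n) → EuclideanSpace ℝ (Fin n))
    (hf' : ∀ x, HasGradientAt f (f' x) x)
    (hfconv : ConvexOn ℝ univ f)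
    (hf0 : f 0 = 0)
    (hfnn : ∀ x, 0 ≤ f x)
    (A B : ℝ) (hB : 0 < B) (hAB : B ≤ Real.exp A)
    (a : ℝ) (ha : a ∈ Icc (0 : ℝ) 1)
    (x v Y Z : EuclideanSpace ℝ (Fin n))
    (hY : Y = x + (a * Real.exp (-A)) • v)
    (hZ : Z = x + Real.exp (-A) • v) :
    B * f x + ⟪v, f' x⟫ ≤ Real.exp A * ⟪Z, f' Y⟫ := by
  rw [real_inner_comm, real_inner_comm _ Z, hZ, hY]
  exact godec_key_inequality_general hfconv (fun y _ ↦ (hf' y).hasFDerivAt.hasFDerivWithinAt)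
    (mem_univ 0) hf0.le hAB ha (mem_univ x) (hfnn x) (mem_univ _)
end

section
/- Let f : ℝⁿ → ℝ be a differentiable convex function, let b ∈ (0,1], let s > 0, and let x_prev, x, y, x_next ∈ ℝⁿ satisfy y = x + b·(x − x_prev) and x_next = y − s·∇f(y). Then f(y) − f(x) ≤ −(b/s)·⟨x_next − 2x + x_prev, x − x_prev⟩. -/
open Set RealInnerProductSpace

/-!
Put `d = x - xPrev`, so that `y - x = b • d`. The second difference of the iterates is
`xNext - 2 • x + xPrev = (b - 1) • d - s • ∇f(y)`, and pairing it with `-(b / s) • d` gives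
`⟪∇f(y), y - x⟫ + (b * (1 - b) / s) * ‖d‖ ^ 2`. The first term bounds `f y - f x` by convexity and
the second one is nonnegative because `0 ≤ b ≤ 1`.
-/

section FirstOrderConvexity

lemma convexOn_add_lineDerivWithin_le {E : Type*} [AddCommGroup E] [Module ℝ E] {S : Set E}
    {f : E → ℝ} {f' : ℝ} {x v : E} (hf : ConvexOn ℝ S f) (hx : x ∈ S) (hxv : x + v ∈ S)
    (hf' : HasLineDerivWithinAt ℝ f f' S x v) : f x + f' ≤ f (x + v) := by
  have hlineMap : ⇑(AffineMap.lineMap x (x + v) : ℝ →ᵃ[ℝ] E) = fun t ↦ x + t • v := by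
    ext t
    simp [AffineMap.lineMap_apply_module', add_comm]
  have hline : ConvexOn ℝ ((fun t : ℝ ↦ x + t • v) ⁻¹' S) (fun t ↦ f (x + t • v)) := by
    simpa only [hlineMap, Function.comp_def] using
      hf.comp_affineMap (AffineMap.lineMap x (x + v) : ℝ →ᵃ[ℝ] E)
  have hslope : f' ≤ slope (fun t : ℝ ↦ f (x + t • v)) 0 1 :=
    hline.le_slope_of_hasDerivWithinAt (by simpa using hx) (by simpa using hxv) zero_lt_one hf'
  have hsub : f' ≤ f (x + v) - f x := by simpa [slope_def_field] using hslope
  linarith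

lemma convexOn_add_inner_gradientWithin_le {F : Type*} [NormedAddCommGroup F]
    [InnerProductSpace ℝ F] [CompleteSpace F] {S : Set F} {f : F → ℝ} {g x y : F}
    (hf : ConvexOn ℝ S f) (hy : y ∈ S) (hx : x ∈ S) (hg : HasGradientWithinAt f g S y) :
    f y + ⟪g, x - y⟫ ≤ f x := by
  simpa using convexOn_add_lineDerivWithin_le hf hy (by simpa using hx)
    (hg.hasFDerivWithinAt.hasLineDerivWithinAt (x - y))

end FirstOrderConvexity

section NesterovStep

lemma nesterov_step_second_difference {E : Type*} [AddCommGroup E] [Module ℝ E] {b s : ℝ}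
    {xPrev x y xNext g : E} (hy : y = x + b • (x - xPrev)) (hxNext : xNext = y - s • g) :
    xNext - (2 : ℝ) • x + xPrev = (b - 1) • (x - xPrev) - s • g := by
  subst hxNext hy
  module

variable {F : Type*} [NormedAddCommGroup F] [InnerProductSpace ℝ F] {b s : ℝ}
  {xPrev x y xNext g : F}

lemma nesterov_step_inner_second_difference (hs : s ≠ 0) (hy : y = x + b • (x - xPrev))
    (hxNext : xNext = y - s • g) :
    -(b / s) * ⟪xNext - (2 : ℝ) • x + xPrev, x - xPrev⟫ =
      ⟪g, y - x⟫ + b * (1 - b) / s * ‖x - xPrev‖ ^ 2 := by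
  have hyx : y - x = b • (x - xPrev) := sub_eq_of_eq_add' hy
  rw [nesterov_step_second_difference hy hxNext, hyx, inner_sub_left, real_inner_smul_left,
    real_inner_smul_left, real_inner_smul_right, real_inner_self_eq_norm_sq]
  field_simp
  ring

lemma nesterov_step_inner_le (hb : 0 ≤ b) (hb1 : b ≤ 1) (hs : 0 < s)
    (hy : y = x + b • (x - xPrev)) (hxNext : xNext = y - s • g) :
    ⟪g, y - x⟫ ≤ -(b / s) * ⟪xNext - (2 : ℝ) • x + xPrev, x - xPrev⟫ := by
  have hcoeff : 0 ≤ b * (1 - b) / s := div_nonneg (mul_nonneg hb (sub_nonneg.mpr hb1)) hs.le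
  rw [nesterov_step_inner_second_difference hs.ne' hy hxNext]
  exact le_add_of_nonneg_right (mul_nonneg hcoeff (sq_nonneg _))

theorem nesterov_restart_central_inequality_general [CompleteSpace F] {S : Set F} {f : F → ℝ}
    (hf : ConvexOn ℝ S f) (hxS : x ∈ S) (hyS : y ∈ S) (hg : HasGradientWithinAt f g S y)
    (hb : 0 ≤ b) (hb1 : b ≤ 1) (hs : 0 < s)
    (hy : y = x + b • (x - xPrev)) (hxNext : xNext = y - s • g) :
    f y - f x ≤ -(b / s) * ⟪xNext - (2 : ℝ) • x + xPrev, x - xPrev⟫ :=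
  calc
    f y - f x ≤ -⟪g, x - y⟫ := by linarith [convexOn_add_inner_gradientWithin_le hf hyS hxS hg]
    _ = ⟪g, y - x⟫ := by rw [← inner_neg_right, neg_sub]
    _ ≤ -(b / s) * ⟪xNext - (2 : ℝ) • x + xPrev, x - xPrev⟫ :=
      nesterov_step_inner_le hb hb1 hs hy hxNext

end NesterovStep

/-- Central inequality in the proof of the restart guarantee:
`f(y) − f(x) ≤ −(b/s)⟨x₊ − 2x + x₋, x − x₋⟩` along one step of Nesterov's
two-sequence method. -/
theorem nesterov_restart_central_inequality {n : ℕ}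
    (f : EuclideanSpace ℝ (Fin n) → ℝ)
    (f' : EuclideanSpace ℝ (Fin n) → EuclideanSpace ℝ (Fin n))
    (hf' : ∀ x, HasGradientAt f (f' x) x)
    (hfconv : ConvexOn ℝ univ f)
    (b s : ℝ) (hb : 0 < b) (hb1 : b ≤ 1) (hs : 0 < s)
    (xPrev x y xNext : EuclideanSpace ℝ (Fin n))
    (hy : y = x + b • (x - xPrev))
    (hxNext : xNext = y - s • f' y) :
    f y - f x ≤ -(b / s) * ⟪xNext - (2 : ℝ) • x + xPrev, x - xPrev⟫ :=
  nesterov_restart_central_inequality_general hfconv (mem_univ x) (mem_univ y)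
    (hasGradientWithinAt_univ.mpr (hf' y)) hb.le hb1 hs hy hxNext
end

section
/- Let f : ℝⁿ → ℝ be a differentiable convex function, and let b, c₁, c₂ : [0,∞) → ℝ be functions with b(t) > 0, c₁(t) > 0, c₂(t) > 0 for all t. Suppose X : [0,∞) → ℝⁿ is twice differentiable and satisfies Ẍ(t) + c₁(t)·Ẋ(t) + c₂(t)·∇f(X(t) + b(t)·Ẋ(t)) = 0 for all t ≥ 0. Then for every t ≥ 0, the derivative of t ↦ f(X(t)) satisfies (d/dt) f(X(t)) ≤ −(1/(2·c₂(t)))·(d/dt)‖Ẋ(t)‖² − (c₁(t)/c₂(t))·‖Ẋ(t)‖². In particular, on any interval where (d/dt)‖Ẋ(t)‖² ≥ 0 and Ẋ(t) ≠ 0, the function t ↦ f(X(t)) is strictly decreasing. -/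
open Set RealInnerProductSpace

/-!
Pairing the equation of motion with `Ẋ` expresses `⟪∇f(X + b Ẋ), Ẋ⟫` through `d/dt ‖Ẋ‖²` and
`‖Ẋ‖²`. Since `∇f` is a monotone operator, `d/dt f(X) = ⟪∇f(X), Ẋ⟫` is at most that quantity, which
is negative as soon as the speed is nonzero and non-decreasing.
-/

theorem le_sub_of_convexOn_of_hasLineDerivAt {E : Type*} [AddCommGroup E] [Module ℝ E]
    {s : Set E} {f : E → ℝ} {x y : E} {m : ℝ} (hf : ConvexOn ℝ s f) (hx : x ∈ s) (hy : y ∈ s)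
    (hm : HasLineDerivAt ℝ f m x (y - x)) : m ≤ f y - f x := by
  have hline : ConvexOn ℝ (AffineMap.lineMap x y ⁻¹' s) (f ∘ AffineMap.lineMap (k := ℝ) x y) :=
    hf.comp_affineMap _
  have hderiv : HasDerivAt (f ∘ AffineMap.lineMap (k := ℝ) x y) m 0 := by
    simpa only [HasLineDerivAt, Function.comp_def, AffineMap.lineMap_apply_module', add_comm x]
      using hm
  simpa [slope_def_field] using
    hline.le_slope_of_hasDerivAt (x := 0) (y := 1) (by simpa) (by simpa) one_pos hderiv

section Hilbert

variable {E : Type*} [NormedAddCommGroup E] [InnerProductSpace ℝ E]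

theorem inner_eq_of_add_smul_add_smul_eq_zero {a v g : E} {c₁ c₂ : ℝ} (hc₂ : c₂ ≠ 0)
    (h : a + c₁ • v + c₂ • g = 0) :
    ⟪g, v⟫ = -(1 / (2 * c₂)) * (2 * ⟪v, a⟫) - (c₁ / c₂) * ‖v‖ ^ 2 := by
  have hpair : ⟪v, a⟫ + c₁ * ‖v‖ ^ 2 + c₂ * ⟪g, v⟫ = 0 := by
    simpa only [inner_add_left, real_inner_smul_left, inner_zero_left,
      real_inner_self_eq_norm_sq, real_inner_comm v a] using congrArg (⟪·, v⟫) h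
  field_simp
  linarith

variable [CompleteSpace E] {f : E → ℝ}

theorem inner_le_sub_of_convexOn_of_hasGradientAt {s : Set E} {x y g : E}
    (hf : ConvexOn ℝ s f) (hx : x ∈ s) (hy : y ∈ s) (hg : HasGradientAt f g x) :
    ⟪g, y - x⟫ ≤ f y - f x :=
  le_sub_of_convexOn_of_hasLineDerivAt hf hx hy (hg.hasFDerivAt.hasLineDerivAt (y - x))

theorem inner_sub_nonneg_of_convexOn_of_hasGradientAt {s : Set E} {x y gx gy : E}
    (hf : ConvexOn ℝ s f) (hx : x ∈ s) (hy : y ∈ s)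
    (hgx : HasGradientAt f gx x) (hgy : HasGradientAt f gy y) :
    0 ≤ ⟪gy - gx, y - x⟫ := by
  have hxy := inner_le_sub_of_convexOn_of_hasGradientAt hf hx hy hgx
  have hyx := inner_le_sub_of_convexOn_of_hasGradientAt hf hy hx hgy
  rw [← neg_sub y x, inner_neg_right] at hyx
  rw [inner_sub_left]
  linarith

theorem inner_le_inner_of_convexOn_of_hasGradientAt_add_smul {s : Set E} {x v gx gy : E} {b : ℝ}
    (hf : ConvexOn ℝ s f) (hx : x ∈ s) (hy : x + b • v ∈ s) (hb : 0 ≤ b)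
    (hgx : HasGradientAt f gx x) (hgy : HasGradientAt f gy (x + b • v)) :
    ⟪gx, v⟫ ≤ ⟪gy, v⟫ := by
  rcases hb.eq_or_lt with rfl | hb
  · rw [hgx.unique (by simpa using hgy)]
  · have hmono := inner_sub_nonneg_of_convexOn_of_hasGradientAt hf hx hy hgx hgy
    rw [add_sub_cancel_left, real_inner_smul_right, inner_sub_left] at hmono
    exact sub_nonneg.mp (nonneg_of_mul_nonneg_right hmono hb)

theorem hasDerivAt_comp_of_hasGradientAt {X : ℝ → E} {g v : E} {t : ℝ}
    (hf : HasGradientAt f g (X t)) (hX : HasDerivAt X v t) :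
    HasDerivAt (fun u => f (X u)) ⟪g, v⟫ t :=
  hf.hasFDerivAt.comp_hasDerivAt t hX

theorem deriv_comp_le_of_add_smul_add_smul_eq_zero {s : Set E} {X X' : ℝ → E} {a gx gy : E}
    {b c₁ c₂ t : ℝ} (hf : ConvexOn ℝ s f) (hx : X t ∈ s) (hy : X t + b • X' t ∈ s)
    (hgx : HasGradientAt f gx (X t)) (hgy : HasGradientAt f gy (X t + b • X' t))
    (hb : 0 ≤ b) (hc₂ : c₂ ≠ 0) (hX : HasDerivAt X (X' t) t) (hX' : HasDerivAt X' a t)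
    (hODE : a + c₁ • X' t + c₂ • gy = 0) :
    deriv (fun u => f (X u)) t ≤
      -(1 / (2 * c₂)) * deriv (fun u => ‖X' u‖ ^ 2) t - (c₁ / c₂) * ‖X' t‖ ^ 2 :=
  calc deriv (fun u => f (X u)) t
    _ = ⟪gx, X' t⟫ := (hasDerivAt_comp_of_hasGradientAt hgx hX).deriv
    _ ≤ ⟪gy, X' t⟫ := inner_le_inner_of_convexOn_of_hasGradientAt_add_smul hf hx hy hb hgx hgy
    _ = -(1 / (2 * c₂)) * (2 * ⟪X' t, a⟫) - (c₁ / c₂) * ‖X' t‖ ^ 2 :=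
      inner_eq_of_add_smul_add_smul_eq_zero hc₂ hODE
    _ = -(1 / (2 * c₂)) * deriv (fun u => ‖X' u‖ ^ 2) t - (c₁ / c₂) * ‖X' t‖ ^ 2 := by
      rw [hX'.norm_sq.deriv]

end Hilbert

theorem neg_mul_sub_mul_norm_sq_neg {E : Type*} [NormedAddCommGroup E] {v : E} {c₁ c₂ r : ℝ}
    (hc₁ : 0 < c₁) (hc₂ : 0 < c₂) (hr : 0 ≤ r) (hv : v ≠ 0) :
    -(1 / (2 * c₂)) * r - (c₁ / c₂) * ‖v‖ ^ 2 < 0 := by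
  have hspeed : 0 ≤ 1 / (2 * c₂) * r := by positivity
  have hfriction : 0 < c₁ / c₂ * ‖v‖ ^ 2 := by positivity
  linarith

/-- `T = Ioi 0` accommodates damping singular at the origin, such as Nesterov's `c₁ t = 3 / t`, and
`b = 0` the dynamics without gradient correction. -/
theorem restart_continuous_descent_general {E : Type*} [NormedAddCommGroup E]
    [InnerProductSpace ℝ E] [CompleteSpace E] {f : E → ℝ} {f' : E → E}
    (hf' : ∀ x, HasGradientAt f (f' x) x) (hfconv : ConvexOn ℝ univ f)
    {T : Set ℝ} {b c₁ c₂ : ℝ → ℝ} (hb : ∀ t ∈ T, 0 ≤ b t) (hc₁ : ∀ t ∈ T, 0 < c₁ t)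
    (hc₂ : ∀ t ∈ T, 0 < c₂ t) {X X' X'' : ℝ → E} (hX : ∀ t ∈ T, HasDerivAt X (X' t) t)
    (hX' : ∀ t ∈ T, HasDerivAt X' (X'' t) t)
    (hODE : ∀ t ∈ T, X'' t + c₁ t • X' t + c₂ t • f' (X t + b t • X' t) = 0) :
    (∀ t ∈ T, deriv (fun u => f (X u)) t ≤
      -(1 / (2 * c₂ t)) * deriv (fun u => ‖X' u‖ ^ 2) t - (c₁ t / c₂ t) * ‖X' t‖ ^ 2) ∧
    (∀ D ⊆ T, Convex ℝ D →
      (∀ t ∈ interior D, 0 ≤ deriv (fun u => ‖X' u‖ ^ 2) t ∧ X' t ≠ 0) →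
      StrictAntiOn (fun t => f (X t)) D) := by
  have hdescent : ∀ t ∈ T, deriv (fun u => f (X u)) t ≤
      -(1 / (2 * c₂ t)) * deriv (fun u => ‖X' u‖ ^ 2) t - (c₁ t / c₂ t) * ‖X' t‖ ^ 2 :=
    fun t ht => deriv_comp_le_of_add_smul_add_smul_eq_zero hfconv (mem_univ _) (mem_univ _)
      (hf' _) (hf' _) (hb t ht) (hc₂ t ht).ne' (hX t ht) (hX' t ht) (hODE t ht)
  refine ⟨hdescent, fun D hDT hD hspeed => strictAntiOn_of_deriv_neg hD ?_ fun t ht => ?_⟩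
  · exact HasDerivAt.continuousOn fun t ht =>
      hasDerivAt_comp_of_hasGradientAt (hf' _) (hX t (hDT ht))
  · have htT : t ∈ T := hDT (interior_subset ht)
    obtain ⟨hmono, hmoving⟩ := hspeed t ht
    exact (hdescent t htT).trans_lt
      (neg_mul_sub_mul_norm_sq_neg (hc₁ t htT) (hc₂ t htT) hmono hmoving)

/-- Continuous-time inequality motivating the restart scheme: along the unified
second-order dynamics `Ẍ + c₁ Ẋ + c₂ ∇f(X + b Ẋ) = 0`, the objective satisfies
`(d/dt) f(X) ≤ −(1/(2c₂)) (d/dt)‖Ẋ‖² − (c₁/c₂)‖Ẋ‖²`, and it strictly decreases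
on intervals where the speed is non-decreasing and nonzero. -/
theorem restart_continuous_descent {n : ℕ}
    (f : EuclideanSpace ℝ (Fin n) → ℝ)
    (f' : EuclideanSpace ℝ (Fin n) → EuclideanSpace ℝ (Fin n))
    (hf' : ∀ x, HasGradientAt f (f' x) x)
    (hfconv : ConvexOn ℝ univ f)
    (b c₁ c₂ : ℝ → ℝ)
    (hbpos : ∀ t, 0 ≤ t → 0 < b t)
    (hc₁pos : ∀ t, 0 ≤ t → 0 < c₁ t)
    (hc₂pos : ∀ t, 0 ≤ t → 0 < c₂ t)
    (X X' X'' : ℝ → EuclideanSpace ℝ (Fin n))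
    (hX : ∀ t, 0 ≤ t → HasDerivAt X (X' t) t)
    (hX' : ∀ t, 0 ≤ t → HasDerivAt X' (X'' t) t)
    (hODE : ∀ t, 0 ≤ t →
      X'' t + c₁ t • X' t + c₂ t • f' (X t + b t • X' t) = 0) :
    (∀ t, 0 ≤ t →
      deriv (fun u => f (X u)) t ≤
        -(1 / (2 * c₂ t)) * deriv (fun u => ‖X' u‖ ^ 2) t -
          (c₁ t / c₂ t) * ‖X' t‖ ^ 2) ∧
    (∀ t₁ t₂ : ℝ, 0 ≤ t₁ → t₁ < t₂ →
      (∀ t ∈ Icc t₁ t₂, 0 ≤ deriv (fun u => ‖X' u‖ ^ 2) t ∧ X' t ≠ 0) →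
      f (X t₂) < f (X t₁)) := by
  obtain ⟨hdescent, hanti⟩ := restart_continuous_descent_general (T := Ici 0) hf' hfconv
    (fun t ht => (hbpos t ht).le) hc₁pos hc₂pos hX hX' hODE
  exact ⟨hdescent, fun t₁ t₂ h₀ h₁₂ hspeed =>
    hanti (Icc t₁ t₂) (Icc_subset_Ici_self.trans (Ici_subset_Ici.mpr h₀)) (convex_Icc t₁ t₂)
      (fun t ht => hspeed t (interior_subset ht))
      (left_mem_Icc.mpr h₁₂.le) (right_mem_Icc.mpr h₁₂.le) h₁₂⟩
end

section
/- Let f : ℝⁿ → ℝ be a differentiable function, let g : ℝⁿ → ℝ be a differentiable convex function, and let c : [0,∞) → ℝ satisfy c(t) > 0 for all t. Suppose Z : [0,∞) → ℝⁿ is differentiable and the curve t ↦ ∇g(Z(t)) is differentiable with derivative (d/dt)∇g(Z(t)) = −c(t)·∇f(Z(t)) for every t ≥ 0. Then the function t ↦ f(Z(t)) is monotonically non-increasing on [0,∞). -/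
open Set RealInnerProductSpace

/-!
If `G` is monotone, the difference quotients of `G ∘ Z` and `Z` pair non-negatively, hence in the
limit so do the velocities `(G ∘ Z)'` and `Z'`. Along the flow `(G ∘ Z)' = -c • f'(Z)` this reads
`-c * (f ∘ Z)' ≥ 0`. The differential of a convex function is such a `G`.
-/

open Filter Topology InnerProductSpace

section NormedSpace

variable {E : Type*} [NormedAddCommGroup E] [NormedSpace ℝ E] {s : Set E}

/-- Monotone operators in the sense of Minty and Browder, from a normed space to its dual. They
abstract the differentials of convex functions. -/
def MonotoneOperatorOn (G : E → StrongDual ℝ E) (s : Set E) : Prop :=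
  ∀ ⦃x⦄, x ∈ s → ∀ ⦃y⦄, y ∈ s → 0 ≤ (G y - G x) (y - x)

theorem apply_sub_le_sub_of_convexOn {g : E → ℝ} {φ : StrongDual ℝ E} {x y : E}
    (hg : ConvexOn ℝ s g) (hx : x ∈ s) (hy : y ∈ s) (hφ : HasFDerivWithinAt g φ s x) :
    φ (y - x) ≤ g y - g x := by
  let γ : ℝ →ᵃ[ℝ] E := AffineMap.lineMap x y
  have hγ0 : γ 0 = x := AffineMap.lineMap_apply_zero x y
  have hγ1 : γ 1 = y := AffineMap.lineMap_apply_one x y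
  have hderiv : HasDerivWithinAt (g ∘ γ) (φ (y - x)) (γ ⁻¹' s) 0 :=
    (hγ0.symm ▸ hφ).comp_hasDerivWithinAt 0 AffineMap.hasDerivWithinAt_lineMap
      (mapsTo_preimage γ s)
  have hslope := (hg.comp_affineMap γ).le_slope_of_hasDerivWithinAt
    (by rwa [mem_preimage, hγ0]) (by rwa [mem_preimage, hγ1]) zero_lt_one hderiv
  simpa [slope_def_field, hγ0, hγ1] using hslope

theorem monotoneOperatorOn_of_convexOn {g : E → ℝ} {g' : E → StrongDual ℝ E}
    (hg : ConvexOn ℝ s g) (hg' : ∀ x ∈ s, HasFDerivWithinAt g (g' x) s x) :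
    MonotoneOperatorOn g' s := by
  intro x hx y hy
  have hxy : g' x (y - x) ≤ g y - g x := apply_sub_le_sub_of_convexOn hg hx hy (hg' x hx)
  have hyx : g' y (x - y) ≤ g x - g y := apply_sub_le_sub_of_convexOn hg hy hx (hg' y hy)
  rw [← neg_sub y x, map_neg] at hyx
  rw [sub_apply]
  linarith

theorem MonotoneOperatorOn.apply_deriv_nonneg {G : E → StrongDual ℝ E}
    (hG : MonotoneOperatorOn G s) {Z : ℝ → E} {p : StrongDual ℝ E} {v : E} {t : ℝ}
    (hZs : ∀ᶠ u in 𝓝 t, Z u ∈ s) (hGZ : HasDerivAt (fun u => G (Z u)) p t)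
    (hZ : HasDerivAt Z v t) : 0 ≤ p v := by
  have hlim : Tendsto (fun u => slope (fun u => G (Z u)) t u (slope Z t u)) (𝓝[≠] t) (𝓝 (p v)) :=
    (isBoundedBilinearMap_apply.continuous.tendsto (p, v)).comp
      (hGZ.tendsto_slope.prodMk_nhds hZ.tendsto_slope)
  refine ge_of_tendsto hlim ((hZs.filter_mono nhdsWithin_le_nhds).mono fun u hu => ?_)
  calc
    0 ≤ (u - t)⁻¹ * ((u - t)⁻¹ * (G (Z u) - G (Z t)) (Z u - Z t)) := by
      rw [← mul_assoc]
      exact mul_nonneg (mul_self_nonneg _) (hG hZs.self_of_nhds hu)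
    _ = slope (fun u => G (Z u)) t u (slope Z t u) := by
      simp only [slope, vsub_eq_sub, smul_apply, map_smul, smul_eq_mul]

theorem qgf_descent_general {f : E → ℝ} {f' G : E → StrongDual ℝ E}
    (hf' : ∀ x ∈ s, HasFDerivWithinAt f (f' x) s x) (hG : MonotoneOperatorOn G s)
    {D : Set ℝ} (hD : Convex ℝ D) {c : ℝ → ℝ} (hc : ∀ t ∈ interior D, 0 < c t)
    {Z Z' : ℝ → E} (hZs : MapsTo Z D s) (hZcont : ContinuousOn Z D)
    (hZ : ∀ t ∈ interior D, HasDerivAt Z (Z' t) t)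
    (hODE : ∀ t ∈ interior D, HasDerivAt (fun u => G (Z u)) (-(c t) • f' (Z t)) t) :
    AntitoneOn (fun t => f (Z t)) D := by
  have hfcont : ContinuousOn f s := fun x hx => (hf' x hx).continuousWithinAt
  refine antitoneOn_of_hasDerivWithinAt_nonpos (f' := fun t => f' (Z t) (Z' t)) hD
    (hfcont.comp hZcont hZs) (fun t ht => ?_) (fun t ht => ?_)
  · exact (hf' (Z t) (hZs (interior_subset ht))).comp_hasDerivWithinAt t
      (hZ t ht).hasDerivWithinAt (hZs.mono_left interior_subset)
  · have hZs_near : ∀ᶠ u in 𝓝 t, Z u ∈ s :=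
      mem_of_superset (mem_interior_iff_mem_nhds.mp ht) hZs
    have hdissipation : 0 ≤ -(c t) * f' (Z t) (Z' t) :=
      hG.apply_deriv_nonneg hZs_near (hODE t ht) (hZ t ht)
    exact nonpos_of_mul_nonneg_right hdissipation (neg_neg_of_pos (hc t ht))

end NormedSpace

-- `toDual ℝ F` is typed as conjugate-linear, so the chain rule for linear maps does not apply.
theorem hasDerivAt_toDual {F : Type*} [NormedAddCommGroup F] [InnerProductSpace ℝ F]
    [CompleteSpace F] {v : ℝ → F} {v' : F} {t : ℝ} (hv : HasDerivAt v v' t) :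
    HasDerivAt (fun u => toDual ℝ F (v u)) (toDual ℝ F v') t := by
  rw [hasDerivAt_iff_tendsto_slope] at hv ⊢
  refine (((toDual ℝ F).continuous.tendsto v').comp hv).congr fun u => ?_
  simp only [slope, Function.comp_apply, vsub_eq_sub, map_smulₛₗ, conj_trivial, map_sub]

/-- Descent property of the quasi-gradient flow `(d/dt)∇g(Z) = −c(t)∇f(Z)`:
the objective value `f(Z(t))` is monotonically non-increasing. -/
theorem qgf_descent {n : ℕ}
    (f g : EuclideanSpace ℝ (Fin n) → ℝ)
    (f' g' : EuclideanSpace ℝ (Fin n) → EuclideanSpace ℝ (Fin n))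
    (hf' : ∀ x, HasGradientAt f (f' x) x)
    (hg' : ∀ x, HasGradientAt g (g' x) x)
    (hgconv : ConvexOn ℝ univ g)
    (c : ℝ → ℝ)
    (hcpos : ∀ t, 0 ≤ t → 0 < c t)
    (Z Z' : ℝ → EuclideanSpace ℝ (Fin n))
    (hZ : ∀ t, 0 ≤ t → HasDerivAt Z (Z' t) t)
    (hODE : ∀ t, 0 ≤ t →
      HasDerivAt (fun u => g' (Z u)) (-(c t) • f' (Z t)) t) :
    AntitoneOn (fun t => f (Z t)) (Ici 0) := by
  have hmono : MonotoneOperatorOn (fun x => toDual ℝ _ (g' x)) univ :=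
    monotoneOperatorOn_of_convexOn hgconv fun x _ => (hg' x).hasFDerivAt.hasFDerivWithinAt
  exact qgf_descent_general (fun x _ => (hf' x).hasFDerivAt.hasFDerivWithinAt) hmono (convex_Ici 0)
    (fun t ht => hcpos t (interior_subset ht)) (mapsTo_univ _ _)
    (fun t ht => (hZ t ht).continuousAt.continuousWithinAt)
    (fun t ht => hZ t (interior_subset ht))
    fun t ht => by
      simpa only [map_smulₛₗ, conj_trivial] using hasDerivAt_toDual (hODE t (interior_subset ht))
end

section
/- Let 0 < μ < L and let (A_k)_{k ≥ 0} be a non-decreasing sequence of positive real numbers such that (A_{k+1} − A_k)² / (μ·A_{k+1}²) ≤ 1/L for all k ≥ 0. Then for every k ≥ 0, A_k ≤ A₀·(1 − √(μ/L))^{−k}. -/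
theorem le_sqrt_mul_of_sq_div_mul_sq_le {μ c x y : ℝ} (hμ : 0 < μ) (hy : 0 < y)
    (h : x ^ 2 / (μ * y ^ 2) ≤ c) : x ≤ √(μ * c) * y := by
  have hratio : (x / y) ^ 2 ≤ μ * c := by
    rwa [div_pow, ← div_le_iff₀' hμ, div_div, mul_comm (y ^ 2)]
  exact (div_le_iff₀ hy).mp (Real.le_sqrt_of_sq_le hratio)

theorem le_inv_one_sub_mul_of_sub_le_mul {𝕜 : Type*} [Field 𝕜] [LinearOrder 𝕜]
    [IsStrictOrderedRing 𝕜] {a b q : 𝕜} (hq : q < 1) (h : b - a ≤ q * b) :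
    b ≤ (1 - q)⁻¹ * a := by
  rw [le_inv_mul_iff₀ (sub_pos.mpr hq)]
  linarith

theorem geometric_growth_bound_general (μ L : ℝ) (hμ : 0 < μ) (hμL : μ < L)
    (A : ℕ → ℝ)
    (hApos : ∀ k, 0 < A k)
    (hstep : ∀ k, (A (k + 1) - A k) ^ 2 / (μ * A (k + 1) ^ 2) ≤ 1 / L) :
    ∀ k, A k ≤ A 0 * (1 - Real.sqrt (μ / L))⁻¹ ^ k := by
  have hq : √(μ / L) < 1 := by
    rwa [Real.sqrt_lt' one_pos, one_pow, div_lt_one (hμ.trans hμL)]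
  have hincrement (k : ℕ) : A (k + 1) - A k ≤ √(μ / L) * A (k + 1) := by
    simpa only [mul_one_div] using
      le_sqrt_mul_of_sq_div_mul_sq_le hμ (hApos (k + 1)) (hstep k)
  have hgrowth (k : ℕ) : A (k + 1) ≤ (1 - √(μ / L))⁻¹ * A k :=
    le_inv_one_sub_mul_of_sub_le_mul hq (hincrement k)
  intro k
  rw [mul_comm]
  exact le_geom (inv_nonneg.mpr (sub_nonneg.mpr hq.le)) k fun j _ ↦ hgrowth j

/-- The step-size condition `s_k = (A_{k+1} − A_k)²/(μ A_{k+1}²) ≤ 1/L` forces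
geometric growth at most `A_k ≤ A₀ (1 − √(μ/L))^{−k}`. -/
theorem geometric_growth_bound (μ L : ℝ) (hμ : 0 < μ) (hμL : μ < L)
    (A : ℕ → ℝ)
    (hApos : ∀ k, 0 < A k)
    (hAmono : Monotone A)
    (hstep : ∀ k, (A (k + 1) - A k) ^ 2 / (μ * A (k + 1) ^ 2) ≤ 1 / L) :
    ∀ k, A k ≤ A 0 * (1 - Real.sqrt (μ / L))⁻¹ ^ k :=
  geometric_growth_bound_general μ L hμ hμL A hApos hstep
end
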